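/- For each k ≥ 1 and |q| < 1: Σ_{λ: l(λ) ≤ k} q^{2|λ| + 2n_2(λ) - λ_1^2} (-q;q^2)_{λ_1} / ((-q^2;q^2)_{λ_k} (q^2;q^2)_λ) = ((-q;q^2)_∞ / (q^2;q^2)_∞) · (q^{4k+2}, q^{4k+1}, q; q^{4k+2})_∞. -/

import Mathlib

/-- Finite q-Pochhammer symbol `(x;q)_n = ∏_{k=0}^{n-1} (1 - x q^k)`. -/
noncomputable def qPoch (x q : ℂ) (n : ℕ) : ℂ := ∏ k ∈ Finset.range n, (1 - x * q ^ k)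

/-- Infinite q-Pochhammer symbol `(x;q)_∞ = ∏_{k≥0} (1 - x q^k)`. -/
noncomputable def qPochInf (x q : ℂ) : ℂ := ∏' k : ℕ, (1 - x * q ^ k)

/-- Partitions with at most `k` (positive) parts: antitone sequences of naturals vanishing
from index `k` on; `l 0` is the largest part `λ_1`, and `l (k-1)` is `λ_k`. -/
def PartK (k : ℕ) : Type := {l : ℕ → ℕ // Antitone l ∧ ∀ i, k ≤ i → l i = 0}

/-- `|λ| = Σ_i λ_i`. -/
def wtK (k : ℕ) (l : PartK k) : ℕ := ∑ i ∈ Finset.range k, l.1 i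

/-- `n_2(λ) = Σ_i λ_i^2`. -/
def n2K (k : ℕ) (l : PartK k) : ℕ := ∑ i ∈ Finset.range k, (l.1 i) ^ 2

/-- `n(λ) = Σ_i binom(λ_i, 2)`. -/
def nK (k : ℕ) (l : PartK k) : ℕ := ∑ i ∈ Finset.range k, Nat.choose (l.1 i) 2

/-- `(x;q)_λ = ∏_{i=1}^{k} (x;q)_{λ_i - λ_{i+1}}` (with `λ_{k+1} = 0`). -/
noncomputable def pochK (x q : ℂ) (k : ℕ) (l : PartK k) : ℂ :=
  ∏ i ∈ Finset.range k, qPoch x q (l.1 i - l.1 (i + 1))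

open Finset Filter Topology

lemma qPoch_succ' (x q : ℂ) (n : ℕ) : qPoch x q (n + 1) = qPoch x q n * (1 - x * q ^ n) := by
  simp [qPoch, Finset.prod_range_succ]

lemma qPoch_zero' (x q : ℂ) : qPoch x q 0 = 1 := by simp [qPoch]

lemma qPoch_add' (x q : ℂ) (m n : ℕ) :
    qPoch x q (m + n) = qPoch x q m * qPoch (x * q ^ m) q n := by
  simp only [qPoch, Finset.prod_range_add]
  congr 1
  refine Finset.prod_congr rfl fun i _ => ?_
  ring

lemma one_sub_ne {Q : ℂ} (hQ : ‖Q‖ < 1) (n : ℕ) : 1 - Q * Q ^ n ≠ 0 := by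
  intro h
  have h1 : Q ^ (n + 1) = 1 := by rw [pow_succ']; linear_combination -h
  have h2 : ‖Q‖ ^ (n + 1) < 1 := pow_lt_one₀ (norm_nonneg _) hQ (by omega)
  rw [← norm_pow, h1] at h2
  simp at h2

lemma po_ne {Q : ℂ} (hQ : ‖Q‖ < 1) (n : ℕ) : qPoch Q Q n ≠ 0 := by
  rw [qPoch, Finset.prod_ne_zero_iff]
  intro i _
  exact one_sub_ne hQ i

/-- The first finite summation. -/
lemma sumA {Q : ℂ} (hQ : ‖Q‖ < 1) (M : ℕ) : ∀ c : ℕ,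
    ∑ i ∈ range (M + 1), Q ^ (i ^ 2 + c * i) /
      (qPoch Q Q (M - i) * qPoch Q Q i * qPoch Q Q (c + i))
      = 1 / (qPoch Q Q M * qPoch Q Q (c + M)) := by
  induction M with
  | zero => intro c; simp [qPoch_zero']
  | succ M ih =>
    intro c
    have hne := po_ne hQ
    have h1 := one_sub_ne hQ
    have key : (1 - Q * Q ^ M) * ∑ i ∈ range (M + 1 + 1), Q ^ (i ^ 2 + c * i) /
      (qPoch Q Q (M + 1 - i) * qPoch Q Q i * qPoch Q Q (c + i)) =
      ∑ i ∈ range (M + 1), Q ^ (i ^ 2 + (c + 1) * i) /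
      (qPoch Q Q (M - i) * qPoch Q Q i * qPoch Q Q (c + 1 + i)) := by
      have e1 : ∀ i ∈ range (M + 1 + 1), (1 - Q * Q ^ M) * (Q ^ (i ^ 2 + c * i) /
          (qPoch Q Q (M + 1 - i) * qPoch Q Q i * qPoch Q Q (c + i))) =
          Q ^ (i ^ 2 + c * i) * Q ^ i * (1 - Q ^ (M + 1 - i)) /
          (qPoch Q Q (M + 1 - i) * qPoch Q Q i * qPoch Q Q (c + i)) +
          Q ^ (i ^ 2 + c * i) * (1 - Q ^ i) /
          (qPoch Q Q (M + 1 - i) * qPoch Q Q i * qPoch Q Q (c + i)) := by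
        intro i hi
        obtain ⟨s, hs⟩ := Nat.exists_eq_add_of_le (Nat.lt_succ_iff.mp (mem_range.mp hi))
        have : Q * Q ^ M = Q ^ i * Q ^ (M + 1 - i) := by
          rw [← pow_succ', ← pow_add]; congr 1; omega
        rw [this]
        ring
      rw [mul_sum, sum_congr rfl e1, sum_add_distrib, sum_range_succ]
      rw [sum_range_succ' (fun i => Q ^ (i ^ 2 + c * i) * (1 - Q ^ i) /
          (qPoch Q Q (M + 1 - i) * qPoch Q Q i * qPoch Q Q (c + i)))]
      simp only [Nat.sub_self, pow_zero, sub_self, mul_zero, zero_div, add_zero]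
      rw [← sum_add_distrib]
      refine sum_congr rfl fun i hi => ?_
      obtain ⟨s, rfl⟩ := Nat.exists_eq_add_of_le (Nat.lt_succ_iff.mp (mem_range.mp hi))
      have a1 : i + s + 1 - i = s + 1 := by omega
      have a2 : i + s + 1 - (i + 1) = s := by omega
      have a3 : i + s - i = s := by omega
      have a4 : c + 1 + i = c + i + 1 := by omega
      rw [a1, a2, a3, a4, ← add_assoc c i 1]
      simp only [qPoch_succ']
      have := hne s; have := hne i; have := hne (c + i)
      have := h1 s; have := h1 i; have := h1 (c + i)
      rw [show 1 - Q ^ (s + 1) = 1 - Q * Q ^ s by ring,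
        show 1 - Q ^ (i + 1) = 1 - Q * Q ^ i by ring]
      generalize hD1 : 1 - Q * Q ^ s = D1 at *
      generalize hD2 : 1 - Q * Q ^ i = D2 at *
      generalize hD3 : 1 - Q * Q ^ (c + i) = D3 at *
      field_simp
      rw [← hD3]
      ring
    rw [ih] at key
    have := h1 M; have := hne M; have := hne (c + 1 + M)
    rw [show c + (M + 1) = c + 1 + M by omega, qPoch_succ' _ _ M]
    rw [eq_div_iff (by positivity)] at key ⊢
    linear_combination key

/-- The second finite summation. -/
lemma sumB {q Q : ℂ} (hQ : ‖Q‖ < 1) (hqQ : Q = q ^ 2) (x : ℂ) (M : ℕ) : ∀ (c : ℕ) (w : ℂ),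
    -x * q * w = Q * Q ^ c →
    ∑ i ∈ range (M + 1), qPoch x Q i * w ^ i * q ^ (i ^ 2) /
      (qPoch Q Q (M - i) * qPoch Q Q i * qPoch Q Q (c + i))
      = qPoch (-q * w) Q M / (qPoch Q Q M * qPoch Q Q (c + M)) := by
  induction M with
  | zero => intro c w _; simp [qPoch_zero']
  | succ M ih =>
    intro c w hw
    have hne := po_ne hQ
    have h1 := one_sub_ne hQ
    have key : (1 - Q * Q ^ M) * ∑ i ∈ range (M + 1 + 1), qPoch x Q i * w ^ i * q ^ (i ^ 2) /
      (qPoch Q Q (M + 1 - i) * qPoch Q Q i * qPoch Q Q (c + i)) =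
      (1 + q * w) * ∑ i ∈ range (M + 1), qPoch x Q i * (w * Q) ^ i * q ^ (i ^ 2) /
      (qPoch Q Q (M - i) * qPoch Q Q i * qPoch Q Q (c + 1 + i)) := by
      have e1 : ∀ i ∈ range (M + 1 + 1), (1 - Q * Q ^ M) * (qPoch x Q i * w ^ i * q ^ (i ^ 2) /
          (qPoch Q Q (M + 1 - i) * qPoch Q Q i * qPoch Q Q (c + i))) =
          qPoch x Q i * w ^ i * q ^ (i ^ 2) * Q ^ i * (1 - Q ^ (M + 1 - i)) /
          (qPoch Q Q (M + 1 - i) * qPoch Q Q i * qPoch Q Q (c + i)) +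
          qPoch x Q i * w ^ i * q ^ (i ^ 2) * (1 - Q ^ i) /
          (qPoch Q Q (M + 1 - i) * qPoch Q Q i * qPoch Q Q (c + i)) := by
        intro i hi
        obtain ⟨s, hs⟩ := Nat.exists_eq_add_of_le (Nat.lt_succ_iff.mp (mem_range.mp hi))
        have : Q * Q ^ M = Q ^ i * Q ^ (M + 1 - i) := by
          rw [← pow_succ', ← pow_add]; congr 1; omega
        rw [this]
        ring
      rw [mul_sum, sum_congr rfl e1, sum_add_distrib, sum_range_succ]
      rw [sum_range_succ' (fun i => qPoch x Q i * w ^ i * q ^ (i ^ 2) * (1 - Q ^ i) /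
          (qPoch Q Q (M + 1 - i) * qPoch Q Q i * qPoch Q Q (c + i)))]
      simp only [Nat.sub_self, pow_zero, sub_self, mul_zero, zero_div, add_zero]
      rw [← sum_add_distrib, mul_sum]
      refine sum_congr rfl fun i hi => ?_
      obtain ⟨s, rfl⟩ := Nat.exists_eq_add_of_le (Nat.lt_succ_iff.mp (mem_range.mp hi))
      have a1 : i + s + 1 - i = s + 1 := by omega
      have a2 : i + s + 1 - (i + 1) = s := by omega
      have a3 : i + s - i = s := by omega
      have a4 : c + 1 + i = c + i + 1 := by omega
      rw [a1, a2, a3, a4, ← add_assoc c i 1]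
      simp only [qPoch_succ']
      have := hne s; have := hne i; have := hne (c + i)
      have := h1 s; have := h1 i; have := h1 (c + i)
      rw [show 1 - Q ^ (s + 1) = 1 - Q * Q ^ s by ring,
        show 1 - Q ^ (i + 1) = 1 - Q * Q ^ i by ring]
      have e2 : q ^ ((i + 1) ^ 2) = q ^ (i ^ 2) * Q ^ i * q := by rw [hqQ]; ring
      have e3 : Q * Q ^ (c + i) = -x * q * w * Q ^ i := by rw [hw]; ring
      rw [e2, mul_pow]
      generalize hD1 : 1 - Q * Q ^ s = D1 at *
      generalize hD2 : 1 - Q * Q ^ i = D2 at *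
      generalize hD3 : 1 - Q * Q ^ (c + i) = D3 at *
      field_simp
      rw [← hD3, e3]
      ring
    rw [ih (c + 1) (w * Q) (by rw [pow_succ]; linear_combination Q * hw)] at key
    have := h1 M; have := hne M; have := hne (c + 1 + M)
    have e4 : qPoch (-q * w) Q (M + 1) = (1 + q * w) * qPoch (-q * (w * Q)) Q M := by
      rw [add_comm M 1, qPoch_add', ← mul_assoc]; simp [qPoch]
    rw [e4, show c + (M + 1) = c + 1 + M by omega, qPoch_succ' _ _ M]
    rw [← mul_div_assoc, eq_div_iff (by positivity)] at key
    rw [eq_div_iff (by positivity)]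
    linear_combination key

/-- The initial Bailey pair. -/
lemma base_pair {Q : ℂ} (hQ : ‖Q‖ < 1) (n : ℕ) :
    ∑ r ∈ range (n + 1), (-1) ^ r * Q ^ (r ^ 2) * (1 - Q ^ (2 * r + 1)) /
      (qPoch Q Q (n - r) * qPoch Q Q (n + r + 1)) = 1 / (qPoch (-Q) Q n * qPoch Q Q n) := by
  have hne := po_ne hQ
  have h1 := one_sub_ne hQ
  have h2 : ∀ n : ℕ, 1 + Q * Q ^ n ≠ 0 := by
    intro n h
    have h1 : Q ^ (n + 1) = -1 := by rw [pow_succ']; linear_combination h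
    have h2 : ‖Q‖ ^ (n + 1) < 1 := pow_lt_one₀ (norm_nonneg _) hQ (by omega)
    rw [← norm_pow, h1] at h2
    simp at h2
  have h3 : ∀ n : ℕ, qPoch (-Q) Q n ≠ 0 := by
    intro n
    rw [qPoch, Finset.prod_ne_zero_iff]
    intro i _
    have := h2 i
    rwa [neg_mul, sub_neg_eq_add]
  induction n with
  | zero => 
    have := h1 0
    have := hne 1
    simp [qPoch] at *
    exact this
  | succ n ih =>
    set G : ℕ → ℂ := fun r : ℕ => -(-1) ^ r * Q ^ (n + 1 + r * (r - 1)) * (1 - Q ^ (2 * r)) /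
          (qPoch Q Q (n + 1 - r) * qPoch Q Q (n + r + 1)) with hG
    have tel : ∀ r ∈ range (n + 1),
        (1 - Q ^ (2 * n + 2)) * ((-1) ^ r * Q ^ (r ^ 2) * (1 - Q ^ (2 * r + 1)) /
          (qPoch Q Q (n + 1 - r) * qPoch Q Q (n + 1 + r + 1))) =
        (-1) ^ r * Q ^ (r ^ 2) * (1 - Q ^ (2 * r + 1)) /
          (qPoch Q Q (n - r) * qPoch Q Q (n + r + 1)) +
        (G (r + 1) -
        G r) := by
      intro r hr
      obtain ⟨s, rfl⟩ := Nat.exists_eq_add_of_le (Nat.lt_succ_iff.mp (mem_range.mp hr))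
      have a1 : r + s + 1 - r = s + 1 := by omega
      have a2 : r + s + 1 - (r + 1) = s := by omega
      have a3 : r + s - r = s := by omega
      have a4 : r + s + 1 + r + 1 = r + s + r + 1 + 1 := by omega
      have a5 : r + s + (r + 1) + 1 = r + s + r + 1 + 1 := by omega
      simp only [hG, a1, a2, a3, a4, a5, Nat.add_sub_cancel]
      rw [qPoch_succ' _ _ (r + s + r + 1), qPoch_succ' _ _ s]
      have := hne s; have := hne (r + s + r + 1)
      have := h1 s; have := h1 (r + s + r + 1)
      generalize hD1 : 1 - Q * Q ^ s = D1 at *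
      generalize hD2 : 1 - Q * Q ^ (r + s + r + 1) = D2 at *
      field_simp
      rw [← hD1, ← hD2]
      rcases r with _ | r
      · simp
        ring
      · simp only [Nat.add_sub_cancel]
        ring
    have e := sum_congr rfl tel
    rw [← mul_sum, sum_add_distrib, ih, sum_range_sub] at e
    have hl : (1 - Q ^ (2 * n + 2)) ≠ 0 := by
      have := h1 (2 * n + 1)
      rwa [← pow_succ'] at this
    rw [sum_range_succ]
    apply mul_left_cancel₀ hl
    rw [mul_add, e]
    simp only [hG, Nat.sub_self, qPoch_zero', mul_zero, pow_zero, sub_self, zero_div,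
      show n + 1 + (n + 1) + 1 = (2 * n + 2) + 1 by ring, show n + (n + 1) + 1 = 2 * n + 1 + 1 by ring,
      Nat.add_sub_cancel]
    rw [qPoch_succ' Q Q (2 * n + 2), qPoch_succ' Q Q (2 * n + 1), qPoch_succ' Q Q n,
      qPoch_succ' (-Q) Q n]
    have := hne (2 * n + 1); have := h1 (2 * n + 2); have := h1 (2 * n + 1)
    have := h1 n; have := h2 n; have := h3 n; have := hne n
    have e5 : 1 - Q ^ (2 * n + 2) = (1 - Q * Q ^ n) * (1 + Q * Q ^ n) := by ring
    have e6 : 1 - Q * Q ^ (2 * n + 1) = (1 - Q * Q ^ n) * (1 + Q * Q ^ n) := by ring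
    have e7 : 1 - Q ^ (2 * (n + 1)) = (1 - Q * Q ^ n) * (1 + Q * Q ^ n) := by ring
    have e8 : 1 - Q ^ (2 * (n + 1) + 1) = 1 - Q * Q ^ (2 * n + 2) := by ring
    rw [show 1 - -Q * Q ^ n = 1 + Q * Q ^ n by ring, e6, e7, e8, e5]
    generalize hD1 : 1 - Q * Q ^ n = D1 at *
    generalize hD2 : 1 + Q * Q ^ n = D2 at *
    generalize hD3 : 1 - Q * Q ^ (2 * n + 2) = D3 at *
    field_simp
    ring

/-- Finite form of the Jacobi triple product. -/
lemma finite_jtp {z w P : ℂ} (hP : ‖P‖ < 1) (hzw : P = z * w) (N : ℕ) :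
    ∑ r ∈ range (N + 1), (-1) ^ r * P ^ (r.choose 2) * (w ^ r - z ^ (r + 1) * P ^ r) /
      (qPoch P P (N - r) * qPoch P P (N + r + 1)) =
      qPoch z P (N + 1) * qPoch w P N / qPoch P P (2 * N + 1) := by
  have hne := po_ne hP
  have h1 := one_sub_ne hP
  have hc : ∀ r : ℕ, P ^ ((r + 1).choose 2) = P ^ (r.choose 2) * P ^ r := by
    intro r
    rw [Nat.choose_succ_succ' r 1, Nat.choose_one_right, add_comm, pow_add]
  induction N with
  | zero =>
    have := h1 0
    have := hne 1
    simp [qPoch] at *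
  | succ N ih =>
    set G : ℕ → ℂ := fun r => (-1) ^ r * P ^ (r.choose 2) * P ^ (N + 1 - r) *
      (z ^ r * P ^ r * (z * (1 - P ^ N * P * P ^ r) + P ^ r - P ^ N * P) -
        w ^ r * (z * P ^ r - z * P ^ N * P + 1 - P ^ N * P * P ^ r)) /
          (qPoch P P (N + 1 - r) * qPoch P P (N + r + 1)) with hG
    have hG0 : G 0 = 0 := by
      simp only [hG, pow_zero, Nat.sub_zero]; ring
    have tel : ∀ r ∈ range (N + 1),
        ((1 - P * P ^ (2 * N + 1)) * (1 - P * P ^ (2 * N + 2))) *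
        ((-1) ^ r * P ^ (r.choose 2) * (w ^ r - z ^ (r + 1) * P ^ r) /
          (qPoch P P (N + 1 - r) * qPoch P P (N + 1 + r + 1))) =
        ((1 - z * P ^ (N + 1)) * (1 - w * P ^ N)) *
        ((-1) ^ r * P ^ (r.choose 2) * (w ^ r - z ^ (r + 1) * P ^ r) /
          (qPoch P P (N - r) * qPoch P P (N + r + 1))) + (G (r + 1) - G r) := by
      intro r hr
      obtain ⟨s, rfl⟩ := Nat.exists_eq_add_of_le (Nat.lt_succ_iff.mp (mem_range.mp hr))
      have a1 : r + s + 1 - r = s + 1 := by omega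
      have a2 : r + s + 1 - (r + 1) = s := by omega
      have a3 : r + s - r = s := by omega
      have a4 : r + s + 1 + r + 1 = r + s + r + 1 + 1 := by omega
      have a5 : r + s + (r + 1) + 1 = r + s + r + 1 + 1 := by omega
      simp only [hG, a1, a2, a3, a4, a5, hc]
      rw [qPoch_succ' _ _ (r + s + r + 1), qPoch_succ' _ _ s]
      have := hne s; have := hne (r + s + r + 1)
      have := h1 s; have := h1 (r + s + r + 1)
      generalize qPoch P P s = u at *
      generalize qPoch P P (r + s + r + 1) = v at *
      generalize P ^ (r.choose 2) = T at *
      generalize hD1 : 1 - P * P ^ s = D1 at *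
      generalize hD2 : 1 - P * P ^ (r + s + r + 1) = D2 at *
      field_simp
      rw [← hD1, ← hD2]
      subst hzw
      ring
    have e := sum_congr rfl tel
    rw [← mul_sum, sum_add_distrib, ← mul_sum, ih, sum_range_sub, hG0] at e
    have hl := mul_ne_zero (h1 (2 * N + 1)) (h1 (2 * N + 2))
    rw [sum_range_succ]
    apply mul_left_cancel₀ hl
    rw [mul_add, e]
    simp only [hG, Nat.sub_self, qPoch_zero', 
      show N + 1 + (N + 1) + 1 = (2 * N + 2) + 1 by ring, show N + (N + 1) + 1 = 2 * N + 1 + 1 by ring,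
      show 2 * (N + 1) + 1 = (2 * N + 1) + 1 + 1 by ring]
    rw [qPoch_succ' P P (2 * N + 1 + 1), qPoch_succ' P P (2 * N + 1), qPoch_succ' z P (N + 1), 
      qPoch_succ' w P N]
    have := hne (2 * N + 1); have := h1 (2 * N + 1 + 1); have := h1 (2 * N + 1)
    generalize qPoch P P (2 * N + 1) = v at *
    generalize P ^ ((N + 1).choose 2) = T at *
    generalize hD1 : 1 - P * P ^ (2 * N + 1) = D1 at *
    rw [show 2 * N + 1 + 1 = 2 * N + 2 by ring] at *
    generalize hD2 : 1 - P * P ^ (2 * N + 2) = D2 at *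
    field_simp
    try rw [← hD1]
    subst hzw
    ring

/-- Iterated Bailey sequence. -/
noncomputable def bet (Q : ℂ) : ℕ → ℕ → ℂ
  | 0, n => 1 / (qPoch (-Q) Q n * qPoch Q Q n)
  | K + 1, n => ∑ m ∈ range (n + 1), Q ^ (m ^ 2 + m) / qPoch Q Q (n - m) * bet Q K m

lemma swap_sum (Q : ℂ) (u A : ℕ → ℂ) (n : ℕ) :
    ∑ m ∈ range (n + 1), u m / qPoch Q Q (n - m) *
      ∑ r ∈ range (m + 1), A r / (qPoch Q Q (m - r) * qPoch Q Q (m + r + 1)) =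
    ∑ r ∈ range (n + 1), A r * ∑ i ∈ range (n - r + 1),
      u (r + i) / (qPoch Q Q (n - r - i) * qPoch Q Q i * qPoch Q Q (2 * r + 1 + i)) := by
  simp only [mul_sum, sum_sigma']
  refine sum_nbij' (fun p => ⟨p.2, p.1 - p.2⟩) (fun p => ⟨p.1 + p.2, p.1⟩) ?_ ?_ ?_ ?_ ?_
  · rintro ⟨m, r⟩ h
    simp only [mem_sigma, mem_range] at h ⊢
    omega
  · rintro ⟨m, r⟩ h
    simp only [mem_sigma, mem_range] at h ⊢
    omega
  · rintro ⟨m, r⟩ h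
    simp only [mem_sigma, mem_range] at h
    simp only [Sigma.mk.injEq, heq_eq_eq, and_true]
    omega
  · rintro ⟨m, r⟩ h
    simp only [Sigma.mk.injEq, heq_eq_eq, true_and]
    omega
  · rintro ⟨m, r⟩ h
    simp only [mem_sigma, mem_range] at h
    obtain ⟨i, rfl⟩ := Nat.exists_eq_add_of_le (Nat.lt_succ_iff.mp h.2)
    simp only [Nat.add_sub_cancel_left]
    rw [show n - r - i = n - (r + i) by omega, show 2 * r + 1 + i = r + i + r + 1 by ring]
    simp only [div_eq_mul_inv, mul_inv]
    ring

lemma bet_eq {Q : ℂ} (hQ : ‖Q‖ < 1) (K : ℕ) : ∀ n : ℕ,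
    bet Q K n = ∑ r ∈ range (n + 1),
      ((-1) ^ r * Q ^ (r ^ 2 + K * (r ^ 2 + r)) * (1 - Q ^ (2 * r + 1))) /
        (qPoch Q Q (n - r) * qPoch Q Q (n + r + 1)) := by
  induction K with
  | zero =>
    intro n
    rw [bet, ← base_pair hQ]
    simp
  | succ K ih =>
    intro n
    rw [bet]
    simp only [ih]
    rw [swap_sum Q (fun m => Q ^ (m ^ 2 + m))]
    refine sum_congr rfl fun r hr => ?_
    obtain ⟨s, rfl⟩ := Nat.exists_eq_add_of_le (Nat.lt_succ_iff.mp (mem_range.mp hr))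
    have h := sumA hQ s (2 * r + 1)
    have e : ∀ i ∈ range (r + s - r + 1), Q ^ ((r + i) ^ 2 + (r + i)) /
        (qPoch Q Q (r + s - r - i) * qPoch Q Q i * qPoch Q Q (2 * r + 1 + i)) =
        Q ^ (r ^ 2 + r) * (Q ^ (i ^ 2 + (2 * r + 1) * i) /
        (qPoch Q Q (s - i) * qPoch Q Q i * qPoch Q Q (2 * r + 1 + i))) := by
      intro i _
      rw [Nat.add_sub_cancel_left]
      ring
    rw [sum_congr rfl e, ← mul_sum, Nat.add_sub_cancel_left, h,
      show r + s + r + 1 = 2 * r + 1 + s by ring]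
    ring

lemma bailey_final {q : ℂ} (hq : ‖q‖ < 1) (K N : ℕ) :
    ∑ n ∈ range (N + 1), (qPoch (-q) (q ^ 2) n * q ^ (n ^ 2 + 2 * n)) /
      qPoch (q ^ 2) (q ^ 2) (N - n) * bet (q ^ 2) K n =
    qPoch (-q) (q ^ 2) (N + 1) * ∑ r ∈ range (N + 1),
      ((-1) ^ r * q ^ ((2 * K + 3) * r ^ 2 + (2 * K + 2) * r) * (1 - q ^ (2 * r + 1))) /
      (qPoch (q ^ 2) (q ^ 2) (N - r) * qPoch (q ^ 2) (q ^ 2) (N + r + 1)) := by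
  have hQ : ‖q ^ 2‖ < 1 := by
    rw [norm_pow]; exact pow_lt_one₀ (norm_nonneg _) hq (by norm_num)
  simp only [bet_eq hQ]
  rw [swap_sum (q ^ 2) (fun n => qPoch (-q) (q ^ 2) n * q ^ (n ^ 2 + 2 * n)), mul_sum]
  refine sum_congr rfl fun r hr => ?_
  obtain ⟨s, rfl⟩ := Nat.exists_eq_add_of_le (Nat.lt_succ_iff.mp (mem_range.mp hr))
  have h := sumB hQ rfl (-q * (q ^ 2) ^ r) s (2 * r + 1) (q ^ (2 * r + 2)) (by ring)
  have e : ∀ i ∈ range (r + s - r + 1), qPoch (-q) (q ^ 2) (r + i) * q ^ ((r + i) ^ 2 + 2 * (r + i)) /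
        (qPoch (q ^ 2) (q ^ 2) (r + s - r - i) * qPoch (q ^ 2) (q ^ 2) i *
          qPoch (q ^ 2) (q ^ 2) (2 * r + 1 + i)) =
        (q ^ (r ^ 2 + 2 * r) * qPoch (-q) (q ^ 2) r) *
        (qPoch (-q * (q ^ 2) ^ r) (q ^ 2) i * (q ^ (2 * r + 2)) ^ i * q ^ (i ^ 2) /
        (qPoch (q ^ 2) (q ^ 2) (s - i) * qPoch (q ^ 2) (q ^ 2) i *
          qPoch (q ^ 2) (q ^ 2) (2 * r + 1 + i))) := by
    intro i _
    rw [Nat.add_sub_cancel_left, qPoch_add']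
    ring
  rw [sum_congr rfl e, ← mul_sum, Nat.add_sub_cancel_left, h,
      show r + s + r + 1 = 2 * r + 1 + s by ring]
  have e2 : qPoch (-q) (q ^ 2) (r + s + 1) = qPoch (-q) (q ^ 2) r * ((1 + q ^ (2 * r + 1)) *
      qPoch (-q * q ^ (2 * r + 2)) (q ^ 2) s) := by
    rw [show r + s + 1 = r + (1 + s) by ring, qPoch_add', qPoch_add' _ _ 1]
    congr 2
    · simp [qPoch]; ring
    · congr 1; ring
  rw [e2]
  ring

/-- Prepend an entry to a sequence. -/
def consS (n : ℕ) (l : ℕ → ℕ) : ℕ → ℕ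
  | 0 => n
  | i + 1 => l i

lemma consS_inj (n : ℕ) : Function.Injective (consS n) := by
  intro a b h
  funext i
  exact congrFun h (i + 1)

open Classical in
/-- Partitions with at most `K+1` parts and largest part `n`. -/
noncomputable def fib : ℕ → ℕ → Finset (ℕ → ℕ)
  | 0, n => {consS n (fun _ => 0)}
  | K + 1, n => (range (n + 1)).biUnion fun m => (fib K m).image (consS n)

lemma mem_fib (K : ℕ) : ∀ (n : ℕ) (l : ℕ → ℕ),
    l ∈ fib K n ↔ (Antitone l ∧ ∀ i, K + 1 ≤ i → l i = 0) ∧ l 0 = n := by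
  induction K with
  | zero =>
    intro n l
    rw [fib, mem_singleton]
    constructor
    · rintro rfl
      refine ⟨⟨antitone_nat_of_succ_le fun i => ?_, fun i hi => ?_⟩, rfl⟩
      · cases i <;> simp [consS]
      · cases i with
        | zero => omega
        | succ i => rfl
    · rintro ⟨⟨_, h⟩, h0⟩
      funext i
      cases i with
      | zero => exact h0
      | succ i => exact h _ (by omega)
  | succ K ih =>
    intro n l
    rw [fib]
    simp only [mem_biUnion, mem_range, mem_image, ih]
    constructor
    · rintro ⟨m, hm, a, ⟨⟨h1, h2⟩, h3⟩, rfl⟩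
      refine ⟨⟨antitone_nat_of_succ_le fun i => ?_, fun i hi => ?_⟩, rfl⟩
      · cases i with
        | zero => simp only [consS]; omega
        | succ i => exact h1 (Nat.le_succ i)
      · cases i with
        | zero => omega
        | succ i => exact h2 i (by omega)
    · rintro ⟨⟨h1, h2⟩, h3⟩
      refine ⟨l 1, ?_, fun i => l (i + 1), ⟨⟨?_, ?_⟩, rfl⟩, ?_⟩
      · have := h1 (Nat.zero_le 1); omega
      · intro a b hab; exact h1 (by omega)
      · intro i hi; exact h2 _ (by omega)
      · funext i
        cases i with
        | zero => exact h3.symm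
        | succ i => rfl

lemma sum_fib_succ {E : Type*} [AddCommMonoid E] (K n : ℕ) (f : (ℕ → ℕ) → E) :
    ∑ l ∈ fib (K + 1) n, f l = ∑ m ∈ range (n + 1), ∑ l ∈ fib K m, f (consS n l) := by
  classical
  rw [fib, sum_biUnion]
  · refine sum_congr rfl fun m _ => ?_
    rw [sum_image fun a _ b _ h => consS_inj n h]
  · intro a _ b _ hab
    simp only [Function.onFun]
    rw [disjoint_left]
    intro l h1 h2
    simp only [mem_image] at h1 h2
    obtain ⟨x, hx, rfl⟩ := h1
    obtain ⟨y, hy, h⟩ := h2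
    rw [consS_inj n h] at hy
    exact hab (((mem_fib _ _ _).1 hx).2.symm.trans ((mem_fib _ _ _).1 hy).2)

/-- The weight of a sequence apart from the factor that depends on the largest part only. -/
noncomputable def V (Q : ℂ) (K : ℕ) (l : ℕ → ℕ) : ℂ :=
  (∏ i ∈ range K, Q ^ (l (i + 1) ^ 2 + l (i + 1))) /
    (qPoch (-Q) Q (l K) * ∏ i ∈ range (K + 1), qPoch Q Q (l i - l (i + 1)))

lemma V_cons (Q : ℂ) (K n : ℕ) (l : ℕ → ℕ) :
    V Q (K + 1) (consS n l) = Q ^ (l 0 ^ 2 + l 0) / qPoch Q Q (n - l 0) * V Q K l := by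
  rw [V, V, prod_range_succ' _ K, prod_range_succ' _ (K + 1)]
  simp only [consS, div_eq_mul_inv, mul_inv]
  ring

lemma sum_V (Q : ℂ) (K : ℕ) : ∀ n, ∑ l ∈ fib K n, V Q K l = bet Q K n := by
  induction K with
  | zero => intro n; simp [fib, V, bet, consS]
  | succ K ih =>
    intro n
    rw [sum_fib_succ, bet]
    refine sum_congr rfl fun m _ => ?_
    rw [← ih, mul_sum]
    refine sum_congr rfl fun l hl => ?_
    rw [V_cons, ((mem_fib _ _ _).1 hl).2]

lemma qPoch_tendsto {Q : ℂ} (hQ : ‖Q‖ < 1) (x : ℂ) :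
    Tendsto (fun n => qPoch x Q n) atTop (𝓝 (qPochInf x Q)) := by
  have hs : Summable fun k : ℕ => ‖-(x * Q ^ k)‖ := by
    simp only [norm_neg, norm_mul, norm_pow]
    exact (summable_geometric_of_lt_one (norm_nonneg _) hQ).mul_left _
  have := (multipliable_one_add_of_summable hs).hasProd.tendsto_prod_nat
  simpa [qPoch, qPochInf, sub_eq_add_neg] using this

lemma poInf_ne {Q : ℂ} (hQ : ‖Q‖ < 1) : qPochInf Q Q ≠ 0 := by
  have hs : Summable fun k : ℕ => ‖-(Q * Q ^ k)‖ := by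
    simp only [norm_neg, norm_mul, norm_pow]
    exact (summable_geometric_of_lt_one (norm_nonneg _) hQ).mul_left _
  have := tprod_one_add_ne_zero_of_summable (f := fun k : ℕ => -(Q * Q ^ k))
    (fun i => by rw [← sub_eq_add_neg]; exact one_sub_ne hQ i) hs
  simpa [qPochInf, sub_eq_add_neg] using this

lemma bdd_of_tendsto {f : ℕ → ℂ} {a : ℂ} (h : Tendsto f atTop (𝓝 a)) :
    ∃ C : ℝ, 0 < C ∧ ∀ n, ‖f n‖ ≤ C := by
  obtain ⟨C, hC, h⟩ := (Metric.isBounded_range_of_tendsto f h).exists_pos_norm_le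
  exact ⟨C, hC, fun n => h _ ⟨n, rfl⟩⟩

lemma inv_po_tendsto {Q : ℂ} (hQ : ‖Q‖ < 1) :
    Tendsto (fun n => (qPoch Q Q n)⁻¹) atTop (𝓝 (qPochInf Q Q)⁻¹) :=
  (qPoch_tendsto hQ Q).inv₀ (poInf_ne hQ)

lemma tannery {a : ℕ → ℂ} (ha : Summable fun n => ‖a n‖) (c : ℕ → ℕ → ℂ) (L : ℂ) (C : ℝ)
    (hC : ∀ N r, ‖c N r‖ ≤ C) (hc : ∀ r, Tendsto (fun N => c N r) atTop (𝓝 L)) :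
    Tendsto (fun N => ∑ r ∈ range (N + 1), a r * c N r) atTop (𝓝 ((∑' r, a r) * L)) := by
  have h := tendsto_tsum_of_dominated_convergence (𝓕 := atTop)
    (f := fun N r => if r ∈ range (N + 1) then a r * c N r else 0) (g := fun r => a r * L)
    (bound := fun r => ‖a r‖ * C) (ha.mul_right C) ?_ ?_
  · rw [tsum_mul_right] at h
    refine h.congr fun N => ?_
    rw [tsum_eq_sum (s := range (N + 1))]
    · exact sum_congr rfl fun r hr => if_pos hr
    · intro r hr; exact if_neg hr
  · intro r
    refine ((hc r).const_mul (a r)).congr' ?_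
    filter_upwards [eventually_ge_atTop r] with N hN
    rw [if_pos (mem_range.2 (by omega))]
  · refine Eventually.of_forall fun N r => ?_
    split_ifs
    · rw [norm_mul]
      exact mul_le_mul_of_nonneg_left (hC N r) (norm_nonneg _)
    · rw [norm_zero]
      exact mul_nonneg (norm_nonneg _) ((norm_nonneg _).trans (hC N r))

/-- Tannery for the kernel of a Bailey pair. -/
lemma tannery2 {Q : ℂ} (hQ : ‖Q‖ < 1) {a : ℕ → ℂ} (ha : Summable fun n => ‖a n‖) :
    Tendsto (fun N => ∑ r ∈ range (N + 1), a r / (qPoch Q Q (N - r) * qPoch Q Q (N + r + 1)))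
      atTop (𝓝 ((∑' r, a r) * ((qPochInf Q Q)⁻¹ * (qPochInf Q Q)⁻¹))) := by
  obtain ⟨C, hC0, hC⟩ := bdd_of_tendsto (inv_po_tendsto hQ)
  have := tannery ha (fun N r => (qPoch Q Q (N - r))⁻¹ * (qPoch Q Q (N + r + 1))⁻¹)
    ((qPochInf Q Q)⁻¹ * (qPochInf Q Q)⁻¹) (C * C) ?_ ?_
  · refine this.congr fun N => sum_congr rfl fun r _ => ?_
    rw [← mul_inv, div_eq_mul_inv]
  · intro N r
    rw [norm_mul]
    exact mul_le_mul (hC _) (hC _) (norm_nonneg _) hC0.le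
  · intro r
    refine ((inv_po_tendsto hQ).comp (tendsto_sub_atTop_nat r)).mul
      ((inv_po_tendsto hQ).comp ?_)
    exact tendsto_atTop_mono (fun n => by simp only [id]; omega) tendsto_id

lemma tannery1 {Q : ℂ} (hQ : ‖Q‖ < 1) {a : ℕ → ℂ} (ha : Summable fun n => ‖a n‖) :
    Tendsto (fun N => ∑ r ∈ range (N + 1), a r / qPoch Q Q (N - r))
      atTop (𝓝 ((∑' r, a r) * (qPochInf Q Q)⁻¹)) := by
  obtain ⟨C, hC0, hC⟩ := bdd_of_tendsto (inv_po_tendsto hQ)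
  have := tannery ha (fun N r => (qPoch Q Q (N - r))⁻¹) (qPochInf Q Q)⁻¹ C
    (fun N r => hC _) fun r => (inv_po_tendsto hQ).comp (tendsto_sub_atTop_nat r)
  exact this

lemma norm_V_bound {Q : ℂ} (hQ : ‖Q‖ < 1) (K : ℕ) :
    ∃ C : ℝ, 0 ≤ C ∧ ∀ n, ∑ l ∈ fib K n, ‖V Q K l‖ ≤ C := by
  obtain ⟨C0, hC0, hC⟩ := bdd_of_tendsto (inv_po_tendsto hQ)
  induction K with
  | zero =>
    have hQ2 : ‖Q ^ 2‖ < 1 := by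
      rw [norm_pow]; exact pow_lt_one₀ (norm_nonneg _) hQ (by norm_num)
    obtain ⟨C1, hC1, h1⟩ := bdd_of_tendsto (inv_po_tendsto hQ2)
    refine ⟨C1, hC1.le, fun n => ?_⟩
    refine le_trans (le_of_eq ?_) (h1 n)
    simp only [fib, sum_singleton, V, consS, range_zero, prod_empty, zero_add, prod_range_one,
      Nat.sub_zero, one_div]
    congr 2
    rw [qPoch, qPoch, qPoch, ← prod_mul_distrib]
    refine prod_congr rfl fun i _ => ?_
    ring
  | succ K ih =>
    obtain ⟨D, hD, h⟩ := ih
    refine ⟨C0 * D * (1 - ‖Q‖)⁻¹, by have : 0 < 1 - ‖Q‖ := by linarith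
                                     positivity, fun n => ?_⟩
    rw [sum_fib_succ]
    have hg := summable_geometric_of_lt_one (norm_nonneg Q) hQ
    calc _ ≤ ∑ m ∈ range (n + 1), C0 * D * ‖Q‖ ^ m := by
          refine sum_le_sum fun m _ => ?_
          have e : ∀ l ∈ fib K m, ‖V Q (K + 1) (consS n l)‖ ≤ (C0 * ‖Q‖ ^ m) * ‖V Q K l‖ := by
            intro l hl
            rw [V_cons, ((mem_fib _ _ _).1 hl).2, norm_mul, div_eq_mul_inv, norm_mul, norm_pow]
            refine mul_le_mul_of_nonneg_right ?_ (norm_nonneg _)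
            rw [mul_comm]
            refine mul_le_mul (hC _) ?_ (by positivity) hC0.le
            exact pow_le_pow_of_le_one (norm_nonneg _) hQ.le (Nat.le_add_left _ _)
          refine (sum_le_sum e).trans ?_
          rw [← mul_sum]
          refine (mul_le_mul_of_nonneg_left (h m) (by positivity)).trans (le_of_eq ?_)
          ring
      _ ≤ _ := by
          rw [← mul_sum, ← tsum_geometric_of_lt_one (norm_nonneg Q) hQ]
          exact mul_le_mul_of_nonneg_left (hg.sum_le_tsum _ fun i _ => by positivity)
            (by positivity)

/-- Infinite Jacobi triple product, folded form. -/
lemma jtp {z w P : ℂ} (hz : ‖z‖ < 1) (hw : ‖w‖ < 1) (hzw : P = z * w) :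
    ∑' r : ℕ, (-1) ^ r * P ^ (r.choose 2) * (w ^ r - z ^ (r + 1) * P ^ r) =
      qPochInf P P * qPochInf w P * qPochInf z P := by
  have hP : ‖P‖ < 1 := by
    rw [hzw, norm_mul]
    exact mul_lt_one_of_nonneg_of_lt_one_left (norm_nonneg _) hz hw.le
  have hs : Summable fun r : ℕ =>
      ‖(-1) ^ r * P ^ (r.choose 2) * (w ^ r - z ^ (r + 1) * P ^ r)‖ := by
    refine Summable.of_nonneg_of_le (fun _ => norm_nonneg _) (fun r => ?_)
      ((summable_geometric_of_lt_one (norm_nonneg w) hw).add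
        (summable_geometric_of_lt_one (norm_nonneg z) hz))
    rw [norm_mul, norm_mul, norm_pow, norm_pow, norm_neg, norm_one, one_pow, one_mul]
    refine (mul_le_of_le_one_left (norm_nonneg _)
      (pow_le_one₀ (norm_nonneg _) hP.le)).trans ((norm_sub_le _ _).trans ?_)
    rw [norm_pow, norm_mul, norm_pow, norm_pow]
    refine add_le_add le_rfl ((mul_le_of_le_one_right (by positivity)
      (pow_le_one₀ (norm_nonneg _) hP.le)).trans ?_)
    exact pow_le_pow_of_le_one (norm_nonneg _) hz.le (Nat.le_succ _)
  have h1 := tannery2 hP hs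
  have h2 : Tendsto (fun N => qPoch z P (N + 1) * qPoch w P N * (qPoch P P (2 * N + 1))⁻¹) atTop
      (𝓝 (qPochInf z P * qPochInf w P * (qPochInf P P)⁻¹)) := by
    refine (((qPoch_tendsto hP z).comp (tendsto_add_atTop_nat 1)).mul (qPoch_tendsto hP w)).mul
      ((inv_po_tendsto hP).comp ?_)
    exact tendsto_atTop_mono (fun n => by simp only [id]; omega) tendsto_id
  have h3 := tendsto_nhds_unique (h1.congr fun N => (finite_jtp hP hzw N).trans
    (div_eq_mul_inv _ _)) h2
  have := poInf_ne hP
  field_simp at h3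
  rw [h3]
  ring

/-- The equivalence between partitions and the fibration over the largest part. -/
def fibEquiv (K : ℕ) : (Σ n, fib K n) ≃ PartK (K + 1) where
  toFun p := ⟨p.2.1, ((mem_fib K p.1 p.2.1).1 p.2.2).1⟩
  invFun l := ⟨l.1 0, ⟨l.1, (mem_fib K _ _).2 ⟨l.2, rfl⟩⟩⟩
  left_inv := by
    rintro ⟨n, l, hl⟩
    obtain ⟨h1, rfl⟩ := (mem_fib K n l).1 hl
    rfl
  right_inv := by
    rintro ⟨l, hl⟩
    rfl

lemma two_choose (r : ℕ) : 2 * r.choose 2 + r = r ^ 2 := by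
  induction r with
  | zero => rfl
  | succ r ih =>
    rw [Nat.choose_succ_succ' r 1, Nat.choose_one_right]
    linarith

lemma main_aux (K : ℕ) {q : ℂ} (hq : ‖q‖ < 1) :
    ∑' lam : PartK (K + 1), (qPoch (-q) (q ^ 2) (lam.1 0) * q ^ (lam.1 0 ^ 2 + 2 * lam.1 0)) *
      V (q ^ 2) K lam.1 = qPochInf (-q) (q ^ 2) / qPochInf (q ^ 2) (q ^ 2) *
        (qPochInf (q ^ (4 * K + 6)) (q ^ (4 * K + 6)) *
            qPochInf (q ^ (4 * K + 5)) (q ^ (4 * K + 6)) *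
            qPochInf q (q ^ (4 * K + 6))) := by
  have hQ : ‖q ^ 2‖ < 1 := by
    rw [norm_pow]; exact pow_lt_one₀ (norm_nonneg _) hq (by norm_num)
  have hw : ‖q ^ (4 * K + 5)‖ < 1 := by
    rw [norm_pow]; exact pow_lt_one₀ (norm_nonneg _) hq (by omega)
  have hgeo := summable_geometric_of_lt_one (norm_nonneg q) hq
  obtain ⟨C, hC0, hC⟩ := norm_V_bound hQ K
  obtain ⟨D, hD0, hD⟩ := bdd_of_tendsto (qPoch_tendsto hQ (-q))
  have hu : ∀ n, ‖qPoch (-q) (q ^ 2) n * q ^ (n ^ 2 + 2 * n)‖ ≤ D * ‖q‖ ^ n := by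
    intro n
    rw [norm_mul, norm_pow]
    refine mul_le_mul (hD n) ?_ (by positivity) hD0.le
    exact pow_le_pow_of_le_one (norm_nonneg _) hq.le (by nlinarith)
  set u : ℕ → ℂ := fun n => qPoch (-q) (q ^ 2) n * q ^ (n ^ 2 + 2 * n) with hu'
  have hb : ∀ n, ‖bet (q ^ 2) K n‖ ≤ C := fun n => by
    rw [← sum_V]; exact (norm_sum_le _ _).trans (hC n)
  have hsb : Summable fun n => ‖u n * bet (q ^ 2) K n‖ := by
    refine Summable.of_nonneg_of_le (fun _ => norm_nonneg _) (fun n => ?_) (hgeo.mul_left (D * C))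
    rw [norm_mul]
    refine (mul_le_mul (hu n) (hb n) (norm_nonneg _) (by positivity)).trans (le_of_eq ?_)
    ring
  -- the sum over partitions as a single sum
  have hS : Summable fun p : (Σ n, fib K n) => u p.1 * V (q ^ 2) K p.2.1 := by
    refine Summable.of_norm ?_
    rw [summable_sigma_of_nonneg fun _ => norm_nonneg _]
    refine ⟨fun n => Summable.of_finite, ?_⟩
    refine Summable.of_nonneg_of_le (fun n => tsum_nonneg fun _ => norm_nonneg _) (fun n => ?_)
      (hgeo.mul_left (D * C))
    rw [tsum_fintype, sum_coe_sort (fib K n) (fun l => ‖u n * V (q ^ 2) K l‖)]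
    simp only [norm_mul (u n)]
    rw [← mul_sum]
    refine (mul_le_mul (hu n) (hC n) (sum_nonneg fun _ _ => norm_nonneg _)
      (by positivity)).trans (le_of_eq ?_)
    ring
  have hL : ∑' lam : PartK (K + 1), u (lam.1 0) * V (q ^ 2) K lam.1 =
      ∑' n, u n * bet (q ^ 2) K n := by
    rw [← (fibEquiv K).tsum_eq]
    have e : ∀ p : (Σ n, fib K n), u ((fibEquiv K p).1 0) * V (q ^ 2) K (fibEquiv K p).1 =
        u p.1 * V (q ^ 2) K p.2.1 := by
      rintro ⟨n, l, hl⟩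
      have := ((mem_fib K n l).1 hl).2
      change u (l 0) * V (q ^ 2) K l = u n * V (q ^ 2) K l
      rw [this]
    rw [tsum_congr e, hS.tsum_sigma]
    refine tsum_congr fun n => ?_
    rw [tsum_fintype, sum_coe_sort (fib K n) (fun l => u n * V (q ^ 2) K l), ← mul_sum, sum_V]
  change ∑' lam : PartK (K + 1), u (lam.1 0) * V (q ^ 2) K lam.1 = _
  rw [hL]
  have hterm : ∀ r : ℕ, (-1) ^ r * (q ^ (4 * K + 6)) ^ (r.choose 2) *
      ((q ^ (4 * K + 5)) ^ r - q ^ (r + 1) * (q ^ (4 * K + 6)) ^ r) =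
      (-1) ^ r * q ^ ((2 * K + 3) * r ^ 2 + (2 * K + 2) * r) * (1 - q ^ (2 * r + 1)) := by
    intro r
    have e : (2 * K + 3) * r ^ 2 + (2 * K + 2) * r =
        (4 * K + 6) * r.choose 2 + (4 * K + 5) * r := by
      rw [← two_choose]; ring
    rw [e]
    ring
  have hj := jtp hq hw (P := q ^ (4 * K + 6)) (by ring)
  rw [tsum_congr hterm] at hj
  have hsr : Summable fun r : ℕ =>
      ‖(-1) ^ r * q ^ ((2 * K + 3) * r ^ 2 + (2 * K + 2) * r) * (1 - q ^ (2 * r + 1))‖ := by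
    refine Summable.of_nonneg_of_le (fun _ => norm_nonneg _) (fun r => ?_) (hgeo.mul_left 2)
    rw [norm_mul, norm_mul, norm_pow, norm_pow, norm_neg, norm_one, one_pow, one_mul, mul_comm]
    refine mul_le_mul ?_ ?_ (by positivity) (by norm_num)
    · refine (norm_sub_le _ _).trans ?_
      rw [norm_one, norm_pow]
      have := pow_le_one₀ (n := 2 * r + 1) (norm_nonneg q) hq.le
      linarith
    · exact pow_le_pow_of_le_one (norm_nonneg _) hq.le (by nlinarith)
  have t1 := tannery1 hQ hsb
  have t2 := ((qPoch_tendsto hQ (-q)).comp (tendsto_add_atTop_nat 1)).mul (tannery2 hQ hsr)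
  have t3 := tendsto_nhds_unique (t1.congr fun N => ?_) t2
  · rw [hj] at t3
    have := poInf_ne hQ
    generalize qPochInf (q ^ 2) (q ^ 2) = I at *
    rw [div_mul_eq_mul_div, eq_div_iff this]
    field_simp at t3
    linear_combination t3
  · simp only [Function.comp]
    rw [← bailey_final hq K N]
    refine sum_congr rfl fun n _ => ?_
    rw [hu']
    ring

/-- Identity (17): for `k ≥ 1`, `|q| < 1`,
`Σ_{l(λ)≤k} q^{2|λ|+2n_2(λ)-λ_1^2} (-q;q^2)_{λ_1} / ((-q^2;q^2)_{λ_k} (q^2;q^2)_λ)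
  = ((-q;q^2)_∞/(q^2;q^2)_∞) (q^{4k+2},q^{4k+1},q;q^{4k+2})_∞`. -/
theorem rr_type_17 (k : ℕ) (hk : 1 ≤ k) (q : ℂ) (hq : ‖q‖ < 1) :
    ∑' lam : PartK k,
        q ^ (2 * wtK k lam + 2 * n2K k lam - lam.1 0 ^ 2) *
          qPoch (-q) (q ^ 2) (lam.1 0) /
          (qPoch (-q ^ 2) (q ^ 2) (lam.1 (k - 1)) * pochK (q ^ 2) (q ^ 2) k lam)
      = qPochInf (-q) (q ^ 2) / qPochInf (q ^ 2) (q ^ 2) *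
          (qPochInf (q ^ (4 * k + 2)) (q ^ (4 * k + 2)) *
            qPochInf (q ^ (4 * k + 1)) (q ^ (4 * k + 2)) *
            qPochInf q (q ^ (4 * k + 2))) := by

  obtain ⟨K, rfl⟩ : ∃ K, k = K + 1 := ⟨k - 1, by omega⟩
  have h := main_aux K hq
  rw [show 4 * (K + 1) + 2 = 4 * K + 6 by ring, show 4 * (K + 1) + 1 = 4 * K + 5 by ring, ← h]
  refine tsum_congr fun lam => ?_
  have e : 2 * wtK (K + 1) lam + 2 * n2K (K + 1) lam - lam.1 0 ^ 2 =
      (lam.1 0 ^ 2 + 2 * lam.1 0) +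
        2 * ∑ i ∈ range K, (lam.1 (i + 1) ^ 2 + lam.1 (i + 1)) := by
    rw [wtK, n2K, Finset.sum_range_succ', Finset.sum_range_succ', Finset.sum_add_distrib]
    omega
  rw [e, V, pochK, Nat.add_sub_cancel, pow_add, pow_mul q 2, Finset.prod_pow_eq_pow_sum]
  ring
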